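/- Let 𝒜 be a finite set and π₁, π₂ ∈ Pre(𝒜). Then (a,b) belongs to the join π₁ ∨ π₂ = (π₁ ∪ π₂)⁺ if and only if either (i) (a,b) ∈ π₁ ∪ π₂, or (ii) there exists a finite chain a = c₀, c₁, …, c_ℓ = b (ℓ ≥ 1) such that each consecutive pair (c_{m−1}, c_m) belongs to the symmetric difference π₁ Δ π₂. -/

import Mathlib

/-- A preference relation (preorder) on `A`: a reflexive and transitive
binary relation, viewed as a subset of `A × A`. -/
def IsPref {A : Type*} (π : Set (A × A)) : Prop :=
  (∀ a : A, (a, a) ∈ π) ∧ ∀ a b c : A, (a, b) ∈ π → (b, c) ∈ π → (a, c) ∈ π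

/-- The reflexive-transitive closure of a binary relation `π ⊆ A × A`:
`(a,b) ∈ π⁺` iff `a = b` or there is a finite chain `a = c₀, c₁, …, c_ℓ = b`
(`ℓ ≥ 1`) with each consecutive pair in `π`. -/
def rtClosure {A : Type*} (π : Set (A × A)) : Set (A × A) :=
  {p | p.1 = p.2 ∨ ∃ ℓ : ℕ, 1 ≤ ℓ ∧ ∃ c : Fin (ℓ + 1) → A,
    c 0 = p.1 ∧ c (Fin.last ℓ) = p.2 ∧
    ∀ m : Fin ℓ, (c m.castSucc, c m.succ) ∈ π}

/-!
Call a step of `R ∪ S` *common* if it lies in `R ∩ S`. A common step is absorbed, by transitivity of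
whichever of `R`, `S` contains its neighbour, into the step before or after it. Hence a chain in
`R ∪ S` can be shortened until it is a single step or no step is common, that is, all of its steps
lie in `R ∆ S`.
-/

open Relation
open scoped SetRel symmDiff

section Chains

variable {α : Type*} {R : SetRel α α} {a b : α}

lemma exists_chain_of_transGen (h : TransGen (· ~[R] ·) a b) :
    ∃ ℓ : ℕ, 1 ≤ ℓ ∧ ∃ c : Fin (ℓ + 1) → α,
      c 0 = a ∧ c (Fin.last ℓ) = b ∧ ∀ m : Fin ℓ, c m.castSucc ~[R] c m.succ := by
  induction h using TransGen.head_induction_on with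
  | @single a hab => exact ⟨1, le_rfl, ![a, b], rfl, rfl, Fin.forall_fin_one.2 hab⟩
  | @head a _ hac _ ih =>
    obtain ⟨ℓ, -, c, rfl, hlast, hstep⟩ := ih
    exact ⟨ℓ + 1, ℓ.succ_pos, Fin.cons a c, rfl, hlast, Fin.cases hac hstep⟩

lemma transGen_of_chain {ℓ : ℕ} (hℓ : 1 ≤ ℓ) {c : Fin (ℓ + 1) → α}
    (hstep : ∀ m : Fin ℓ, c m.castSucc ~[R] c m.succ) :
    TransGen (· ~[R] ·) (c 0) (c (Fin.last ℓ)) :=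
  (Fin.liftFun_iff_succ (TransGen (· ~[R] ·))).2 (fun m ↦ .single (hstep m)) (Fin.mk_lt_mk.2 hℓ)

lemma exists_chain_iff_transGen :
    (∃ ℓ : ℕ, 1 ≤ ℓ ∧ ∃ c : Fin (ℓ + 1) → α,
      c 0 = a ∧ c (Fin.last ℓ) = b ∧ ∀ m : Fin ℓ, c m.castSucc ~[R] c m.succ) ↔
      TransGen (· ~[R] ·) a b := by
  refine ⟨?_, exists_chain_of_transGen⟩
  rintro ⟨ℓ, hℓ, c, rfl, rfl, hstep⟩
  exact transGen_of_chain hℓ hstep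

lemma mem_rtClosure_iff_reflTransGen : (a, b) ∈ rtClosure R ↔ ReflTransGen (· ~[R] ·) a b := by
  rw [reflTransGen_iff_eq_or_transGen, ← exists_chain_iff_transGen, eq_comm (a := b)]
  rfl

end Chains

section Union

variable {α : Type*} {R S : SetRel α α} {a b c : α}

lemma union_trans_or_symmDiff [R.IsTrans] [S.IsTrans]
    (hab : a ~[R ∪ S] b) (hbc : b ~[R ∪ S] c) :
    a ~[R ∪ S] c ∨ a ~[R ∆ S] b ∧ b ~[R ∆ S] c := by
  have hR : a ~[R] b → b ~[R] c → a ~[R] c := R.trans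
  have hS : a ~[S] b → b ~[S] c → a ~[S] c := S.trans
  simp only [Set.mem_union, Set.mem_symmDiff] at *
  tauto

lemma transGen_symmDiff_tail_union [R.IsTrans] [S.IsTrans]
    (hab : TransGen (· ~[R ∆ S] ·) a b) (hbc : b ~[R ∪ S] c) :
    a ~[R ∪ S] c ∨ TransGen (· ~[R ∆ S] ·) a c := by
  induction hab generalizing c with
  | single hab =>
    exact (union_trans_or_symmDiff (Set.symmDiff_subset_union hab) hbc).imp_right
      fun ⟨_, hbc⟩ ↦ .tail (.single hab) hbc
  | tail hax hxb ih =>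
    obtain hxc | ⟨-, hbc⟩ := union_trans_or_symmDiff (Set.symmDiff_subset_union hxb) hbc
    · exact ih hxc
    · exact .inr ((hax.tail hxb).tail hbc)

theorem transGen_union_iff [R.IsTrans] [S.IsTrans] :
    TransGen (· ~[R ∪ S] ·) a b ↔ a ~[R ∪ S] b ∨ TransGen (· ~[R ∆ S] ·) a b := by
  constructor
  · intro h
    induction h with
    | single hab => exact .inl hab
    | tail _ hbc ih =>
      obtain hab | hab := ih
      · exact (union_trans_or_symmDiff hab hbc).imp_right fun ⟨hab, hbc⟩ ↦ .tail (.single hab) hbc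
      · exact transGen_symmDiff_tail_union hab hbc
  · rintro (hab | hab)
    · exact .single hab
    · exact TransGen.mono (fun _ _ h ↦ Set.symmDiff_subset_union h) _ _ hab

end Union

lemma IsPref.isRefl {A : Type*} {π : Set (A × A)} (h : IsPref π) : SetRel.IsRefl π := ⟨h.1⟩

lemma IsPref.isTrans {A : Type*} {π : Set (A × A)} (h : IsPref π) : SetRel.IsTrans π := ⟨h.2⟩

theorem mem_join_iff_general {A : Type*} (π₁ π₂ : Set (A × A))
    (h₁ : IsPref π₁) (h₂ : IsPref π₂) (a b : A) :
    (a, b) ∈ rtClosure (π₁ ∪ π₂) ↔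
      (a, b) ∈ π₁ ∪ π₂ ∨
      ∃ ℓ : ℕ, 1 ≤ ℓ ∧ ∃ c : Fin (ℓ + 1) → A,
        c 0 = a ∧ c (Fin.last ℓ) = b ∧
        ∀ m : Fin ℓ, (c m.castSucc, c m.succ) ∈ (π₁ \ π₂) ∪ (π₂ \ π₁) := by
  have := h₁.isRefl
  have := h₁.isTrans
  have := h₂.isTrans
  have : SetRel.IsRefl (π₁ ∪ π₂) := SetRel.isRefl_mono Set.subset_union_left
  rw [mem_rtClosure_iff_reflTransGen, reflTransGen_eq_transGen, exists_chain_iff_transGen]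
  exact transGen_union_iff

/-- For a finite set `A` and preference relations `π₁, π₂` on `A`, a pair
`(a,b)` belongs to the join `π₁ ∨ π₂ = (π₁ ∪ π₂)⁺` iff either
(i) `(a,b) ∈ π₁ ∪ π₂`, or (ii) there is a chain `a = c₀, …, c_ℓ = b` (`ℓ ≥ 1`)
all of whose steps lie in the symmetric difference `π₁ Δ π₂`. -/
theorem mem_join_iff {A : Type*} [Finite A] (π₁ π₂ : Set (A × A))
    (h₁ : IsPref π₁) (h₂ : IsPref π₂) (a b : A) :
    (a, b) ∈ rtClosure (π₁ ∪ π₂) ↔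
      (a, b) ∈ π₁ ∪ π₂ ∨
      ∃ ℓ : ℕ, 1 ≤ ℓ ∧ ∃ c : Fin (ℓ + 1) → A,
        c 0 = a ∧ c (Fin.last ℓ) = b ∧
        ∀ m : Fin ℓ, (c m.castSucc, c m.succ) ∈ (π₁ \ π₂) ∪ (π₂ \ π₁) :=
  mem_join_iff_general π₁ π₂ h₁ h₂ a b
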